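/- arXiv:1706.10059 — 9 statements merged into one kernel-verified Lean document; each statement's English description precedes it below -/
import Mathlib

section
/- f(1) ≤ 1. -/
/-!
Let `S = ∑_{i=1}^m (w' i - w i)⁺`. Then `S ≥ 0`, and since both weight vectors sum to `1`,
`S ≥ ∑_{i=1}^m (w' i - w i) = w 0 - w' 0`. As `cs + cp - cs * cp ≥ cp ≥ 0`, this gives
`(cs + cp - cs * cp) * S ≥ cp * (w 0 - w' 0)`, which is `f 1 ≤ 1` after clearing the positive
denominator `1 - cp * w 0`.
-/

theorem stmt3 (m : ℕ) (hm : 1 ≤ m) (cs cp : ℝ)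
    (hcs0 : 0 ≤ cs) (hcs1 : cs < 1) (hcp0 : 0 ≤ cp) (hcp1 : cp < 1)
    (w w' : ℕ → ℝ)
    (hw : ∀ i, 0 ≤ w i) (hw' : ∀ i, 0 ≤ w' i)
    (hwsum : ∑ i ∈ Finset.range (m + 1), w i = 1)
    (hw'sum : ∑ i ∈ Finset.range (m + 1), w' i = 1)
    (f : ℝ → ℝ)
    (hf : ∀ μ : ℝ, f μ = (1 / (1 - cp * w 0)) *
      (1 - cp * w' 0 - (cs + cp - cs * cp) *
        ∑ i ∈ Finset.Icc 1 m, max (w' i - μ * w i) 0)) :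
    f 1 ≤ 1 := by
  have hsplit : ∀ v : ℕ → ℝ, ∑ i ∈ Finset.range (m + 1), v i
      = v 0 + ∑ i ∈ Finset.Icc 1 m, v i := by
    intro v
    rw [Finset.range_eq_Ico, Finset.sum_eq_sum_Ico_succ_bot (Nat.succ_pos m)]
    rfl
  rw [hsplit] at hwsum hw'sum
  have hS0 : 0 ≤ ∑ i ∈ Finset.Icc 1 m, max (w' i - 1 * w i) 0 :=
    Finset.sum_nonneg fun i _ => le_max_right _ _
  have hS1 : ∑ i ∈ Finset.Icc 1 m, (w' i - 1 * w i)
      ≤ ∑ i ∈ Finset.Icc 1 m, max (w' i - 1 * w i) 0 :=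
    Finset.sum_le_sum fun i _ => le_max_left _ _
  have hdiff : ∑ i ∈ Finset.Icc 1 m, (w' i - 1 * w i) = w 0 - w' 0 := by
    simp only [one_mul, Finset.sum_sub_distrib]
    linarith
  have hw0 : w 0 ≤ 1 := by
    have := Finset.sum_nonneg fun i (_ : i ∈ Finset.Icc 1 m) => hw i
    linarith
  have hden : 0 < 1 - cp * w 0 := by nlinarith [hw 0]
  rw [hf 1, one_div_mul_eq_div, div_le_one hden]
  rw [hdiff] at hS1
  generalize ∑ i ∈ Finset.Icc 1 m, max (w' i - 1 * w i) 0 = S at hS0 hS1 ⊢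
  -- `cs + cp - cs * cp = cp + cs * (1 - cp) ≥ cp`, so `cp * (w 0 - w' 0) ≤ cp * S` suffices.
  have h1 : 0 ≤ cs * (1 - cp) * S :=
    mul_nonneg (mul_nonneg hcs0 (by linarith)) hS0
  have h2 : cp * (w 0 - w' 0) ≤ cp * S := mul_le_mul_of_nonneg_left hS1 hcp0
  linarith
end

section
/- If c_s < 0.38 and c_p < 0.38, then f maps the closed interval [0,1] into itself: for every μ ∈ [0,1] one has 0 < f(μ) ≤ 1, so in particular f(μ) ∈ [0,1]. -/
/-!
Write `k = cs + cp - cs * cp = 1 - (1 - cs) * (1 - cp)`, so `cp ≤ k < 1`, and let `S` be the sum of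
positive parts. For `μ ∈ [0, 1]` one has `w 0 - w' 0 ≤ S ≤ 1 - w' 0`: the lower bound drops the
positive parts and uses `μ ≤ 1`, the upper bound drops `μ * w i ≥ 0`. The upper bound on `S` gives
`cp * w' 0 + k * S ≤ k < 1`, hence positivity of `f μ`; the lower bound gives
`cp * (w 0 - w' 0) ≤ cp * S ≤ k * S`, which is `f μ ≤ 1` after clearing the denominator.
-/

theorem stmt4 (m : ℕ) (hm : 1 ≤ m) (cs cp : ℝ)
    (hcs0 : 0 ≤ cs) (hcs1 : cs < 1) (hcp0 : 0 ≤ cp) (hcp1 : cp < 1)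
    (w w' : ℕ → ℝ)
    (hw : ∀ i, 0 ≤ w i) (hw' : ∀ i, 0 ≤ w' i)
    (hwsum : ∑ i ∈ Finset.range (m + 1), w i = 1)
    (hw'sum : ∑ i ∈ Finset.range (m + 1), w' i = 1)
    (f : ℝ → ℝ)
    (hf : ∀ μ : ℝ, f μ = (1 / (1 - cp * w 0)) *
      (1 - cp * w' 0 - (cs + cp - cs * cp) *
        ∑ i ∈ Finset.Icc 1 m, max (w' i - μ * w i) 0))
    (hcs38 : cs < 0.38) (hcp38 : cp < 0.38) :
    ∀ μ ∈ Set.Icc (0 : ℝ) 1, 0 < f μ ∧ f μ ≤ 1 := by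
  rintro μ ⟨hμ0, hμ1⟩
  have split : ∀ v : ℕ → ℝ, ∑ i ∈ Finset.range (m + 1), v i = v 0 + ∑ i ∈ Finset.Icc 1 m, v i := by
    intro v
    rw [Finset.range_eq_Ico, Finset.sum_eq_sum_Ico_succ_bot (Nat.succ_pos m)]
    rfl
  rw [split] at hwsum hw'sum
  have hW : 0 ≤ ∑ i ∈ Finset.Icc 1 m, w i := Finset.sum_nonneg fun i _ => hw i
  have hS_le : ∑ i ∈ Finset.Icc 1 m, max (w' i - μ * w i) 0 ≤ ∑ i ∈ Finset.Icc 1 m, w' i :=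
    Finset.sum_le_sum fun i _ =>
      max_le (sub_le_self _ (mul_nonneg hμ0 (hw i))) (hw' i)
  have hS_ge : ∑ i ∈ Finset.Icc 1 m, w' i - μ * ∑ i ∈ Finset.Icc 1 m, w i ≤
      ∑ i ∈ Finset.Icc 1 m, max (w' i - μ * w i) 0 := by
    rw [Finset.mul_sum, ← Finset.sum_sub_distrib]
    exact Finset.sum_le_sum fun i _ => le_max_left _ _
  have hS_nonneg : 0 ≤ ∑ i ∈ Finset.Icc 1 m, max (w' i - μ * w i) 0 :=
    Finset.sum_nonneg fun i _ => le_max_right _ _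
  rw [hf μ]
  generalize ∑ i ∈ Finset.Icc 1 m, max (w' i - μ * w i) 0 = S at *
  generalize ∑ i ∈ Finset.Icc 1 m, w i = W at *
  generalize ∑ i ∈ Finset.Icc 1 m, w' i = W' at *
  have hk : cp ≤ cs + cp - cs * cp := by nlinarith
  have hk1 : cs + cp - cs * cp < 1 := by nlinarith
  generalize cs + cp - cs * cp = k at *
  have hden : 0 < 1 - cp * w 0 := by nlinarith [hw 0]
  have hS_diff : w 0 - w' 0 ≤ S := by nlinarith
  constructor
  · refine mul_pos (one_div_pos.mpr hden) ?_
    have h1 : k * S ≤ k * W' := mul_le_mul_of_nonneg_left hS_le (hcp0.trans hk)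
    have h2 : cp * w' 0 ≤ k * w' 0 := mul_le_mul_of_nonneg_right hk (hw' 0)
    have h3 : k * w' 0 + k * W' = k := by rw [← mul_add, hw'sum, mul_one]
    linarith
  · rw [one_div_mul_eq_div, div_le_one hden]
    have h1 : cp * (w 0 - w' 0) ≤ cp * S := mul_le_mul_of_nonneg_left hS_diff hcp0
    have h2 : cp * S ≤ k * S := mul_le_mul_of_nonneg_right hk hS_nonneg
    linarith
end

section
/- A real number μ with 0 < μ ≤ 1 satisfies the fund-balance equation (1 − c_p)·[w'_0 + (1 − c_s)·∑_{i=1}^m (w'_i − μ·w_i)⁺ − μ·w_0] = ∑_{i=1}^m (μ·w_i − w'_i)⁺ if and only if it satisfies the fixed-point equation μ = f(μ). -/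
/-!
Since `x⁺ - (-x)⁺ = x`, the purchase sum equals the sale sum plus
`μ * (1 - w 0) - (1 - w' 0)`, because both weight vectors sum to one. Substituting this turns the
fund-balance equation into an affine relation in `μ` and the sale sum, which is the fixed-point
equation multiplied by the positive denominator `1 - cp * w 0`.
-/

theorem stmt6 (m : ℕ) (hm : 1 ≤ m) (cs cp : ℝ)
    (hcs0 : 0 ≤ cs) (hcs1 : cs < 1) (hcp0 : 0 ≤ cp) (hcp1 : cp < 1)
    (w w' : ℕ → ℝ)
    (hw : ∀ i, 0 ≤ w i) (hw' : ∀ i, 0 ≤ w' i)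
    (hwsum : ∑ i ∈ Finset.range (m + 1), w i = 1)
    (hw'sum : ∑ i ∈ Finset.range (m + 1), w' i = 1)
    (f : ℝ → ℝ)
    (hf : ∀ μ : ℝ, f μ = (1 / (1 - cp * w 0)) *
      (1 - cp * w' 0 - (cs + cp - cs * cp) *
        ∑ i ∈ Finset.Icc 1 m, max (w' i - μ * w i) 0))
    (μ : ℝ) (hμ0 : 0 < μ) (hμ1 : μ ≤ 1) :
    (1 - cp) * (w' 0 + (1 - cs) * (∑ i ∈ Finset.Icc 1 m, max (w' i - μ * w i) 0)
        - μ * w 0) = ∑ i ∈ Finset.Icc 1 m, max (μ * w i - w' i) 0 ↔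
      μ = f μ := by
  have hsplit : ∀ v : ℕ → ℝ, ∑ i ∈ Finset.range (m + 1), v i =
      v 0 + ∑ i ∈ Finset.Icc 1 m, v i := by
    intro v
    rw [Finset.range_eq_Ico, Finset.sum_eq_sum_Ico_succ_bot (Nat.succ_pos m)]
    rfl
  rw [hsplit] at hw'sum hwsum
  -- Purchases minus sales: `(-x)⁺ = x⁺ - x` termwise.
  have hpos : ∑ i ∈ Finset.Icc 1 m, max (μ * w i - w' i) 0 =
      ∑ i ∈ Finset.Icc 1 m, max (w' i - μ * w i) 0
        + μ * ∑ i ∈ Finset.Icc 1 m, w i - ∑ i ∈ Finset.Icc 1 m, w' i := by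
    rw [Finset.mul_sum, ← Finset.sum_add_distrib, ← Finset.sum_sub_distrib]
    refine Finset.sum_congr rfl fun i _ => ?_
    rcases le_total (w' i) (μ * w i) with h | h
    · rw [max_eq_left (by linarith), max_eq_right (by linarith)]; ring
    · rw [max_eq_right (by linarith), max_eq_left (by linarith)]; ring
  have hw0 : w 0 ≤ 1 := by
    have : 0 ≤ ∑ i ∈ Finset.Icc 1 m, w i := Finset.sum_nonneg fun i _ => hw i
    linarith
  have hden : 0 < 1 - cp * w 0 := by nlinarith [hw 0]
  have hW : ∑ i ∈ Finset.Icc 1 m, w i = 1 - w 0 := by linarith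
  have hW' : ∑ i ∈ Finset.Icc 1 m, w' i = 1 - w' 0 := by linarith
  rw [hpos, hf, hW, hW', one_div_mul_eq_div, eq_div_iff (ne_of_gt hden)]
  -- With the denominator cleared, both equations are the same up to rearrangement.
  constructor <;> intro h <;> linear_combination -h
end

section
/- Assume c_s < 0.38 and c_p < 0.38. Then the iteration sequence started at 0, defined by μ⁽⁰⁾ = 0 and μ⁽ᵏ⁾ = f(μ⁽ᵏ⁻¹⁾) for k ≥ 1, is monotonically nondecreasing: μ⁽ᵏ⁾ ≤ μ⁽ᵏ⁺¹⁾ for every k ∈ ℕ. -/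
/-!
The map `f` is nondecreasing, since each `(w'_i - μ w_i)⁺` is nonincreasing in `μ` and its
coefficient `cs + cp - cs * cp` is nonnegative. Moreover `f 0 ≥ 0`, because the bracket at `μ = 0`
equals `(1 - cp) w'_0 + (1 - cs)(1 - cp)(1 - w'_0)`. Iterating a monotone map from a point that it
moves upwards gives a nondecreasing sequence.
-/

theorem stmt8 (m : ℕ) (hm : 1 ≤ m) (cs cp : ℝ)
    (hcs0 : 0 ≤ cs) (hcs1 : cs < 1) (hcp0 : 0 ≤ cp) (hcp1 : cp < 1)
    (w w' : ℕ → ℝ)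
    (hw : ∀ i, 0 ≤ w i) (hw' : ∀ i, 0 ≤ w' i)
    (hwsum : ∑ i ∈ Finset.range (m + 1), w i = 1)
    (hw'sum : ∑ i ∈ Finset.range (m + 1), w' i = 1)
    (f : ℝ → ℝ)
    (hf : ∀ μ : ℝ, f μ = (1 / (1 - cp * w 0)) *
      (1 - cp * w' 0 - (cs + cp - cs * cp) *
        ∑ i ∈ Finset.Icc 1 m, max (w' i - μ * w i) 0))
    (hcs38 : cs < 0.38) (hcp38 : cp < 0.38)
    (μseq : ℕ → ℝ) (h0 : μseq 0 = 0) (hrec : ∀ k : ℕ, μseq (k + 1) = f (μseq k)) :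
    ∀ k : ℕ, μseq k ≤ μseq (k + 1) := by
  have hc : 0 ≤ cs + cp - cs * cp := by nlinarith
  have split : ∀ v : ℕ → ℝ, ∑ i ∈ Finset.range (m + 1), v i = v 0 + ∑ i ∈ Finset.Icc 1 m, v i := by
    intro v
    rw [Finset.range_eq_Ico, Finset.sum_eq_sum_Ico_succ_bot (Nat.succ_pos m)]
    rfl
  have hw0 : w 0 ≤ 1 := by
    rw [← hwsum]
    exact Finset.single_le_sum (fun i _ => hw i) (by simp)
  have hden : 0 ≤ 1 / (1 - cp * w 0) := by
    have : 0 ≤ 1 - cp * w 0 := by nlinarith [hw 0]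
    positivity
  have hmono : Monotone f := by
    intro a b hab
    rw [hf, hf]
    have hsum : ∑ i ∈ Finset.Icc 1 m, max (w' i - b * w i) 0 ≤
        ∑ i ∈ Finset.Icc 1 m, max (w' i - a * w i) 0 :=
      Finset.sum_le_sum fun i _ =>
        max_le_max_right _ (sub_le_sub_left (mul_le_mul_of_nonneg_right hab (hw i)) _)
    exact mul_le_mul_of_nonneg_left
      (sub_le_sub_left (mul_le_mul_of_nonneg_left hsum hc) _) hden
  have hf0 : 0 ≤ f 0 := by
    rw [hf]
    refine mul_nonneg hden ?_
    have hsum : ∑ i ∈ Finset.Icc 1 m, max (w' i - 0 * w i) 0 = ∑ i ∈ Finset.Icc 1 m, w' i :=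
      Finset.sum_congr rfl fun i _ => by simp [hw' i]
    rw [hsum]
    have h1 := split w'
    rw [hw'sum] at h1
    have hS : 0 ≤ ∑ i ∈ Finset.Icc 1 m, w' i := Finset.sum_nonneg fun i _ => hw' i
    -- With S = 1 - w'₀, the bracket is the combination (1 - cp) w'₀ + (1 - cs)(1 - cp) S.
    have h2 : 0 ≤ (1 - cp) * w' 0 := mul_nonneg (by linarith) (hw' 0)
    have h3 : 0 ≤ (1 - cs) * (1 - cp) * ∑ i ∈ Finset.Icc 1 m, w' i :=
      mul_nonneg (mul_nonneg (by linarith) (by linarith)) hS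
    linarith
  intro k
  induction k with
  | zero => rw [hrec, h0]; exact hf0
  | succ k ih => rw [hrec (k + 1), hrec k]; exact hmono (hrec k ▸ ih)
end

section
/- (Lemma 4) Assume c_s < 0.38 and c_p < 0.38, and let μ_t ∈ (0,1] be a fixed point of f, i.e. μ_t = f(μ_t). Then the sequence defined by μ⁽⁰⁾ = 0 and μ⁽ᵏ⁾ = f(μ⁽ᵏ⁻¹⁾) for k ≥ 1 converges to μ_t. -/
/-!
The map `f` is a contraction of `ℝ`. Put `c = cs + cp - cs * cp = 1 - (1 - cs) * (1 - cp) < 1`.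
Since `x ↦ max x 0` is 1-Lipschitz and the risky weights sum to `1 - w 0`, the map `f` has Lipschitz
constant `c * (1 - w 0) / (1 - cp * w 0)`, which is at most `c` because `cp ≤ 1`. Hence
`|μseq k - μt| ≤ c ^ k * |μt|`, which tends to `0`.
-/

theorem stmt9 (m : ℕ) (hm : 1 ≤ m) (cs cp : ℝ)
    (hcs0 : 0 ≤ cs) (hcs1 : cs < 1) (hcp0 : 0 ≤ cp) (hcp1 : cp < 1)
    (w w' : ℕ → ℝ)
    (hw : ∀ i, 0 ≤ w i) (hw' : ∀ i, 0 ≤ w' i)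
    (hwsum : ∑ i ∈ Finset.range (m + 1), w i = 1)
    (hw'sum : ∑ i ∈ Finset.range (m + 1), w' i = 1)
    (f : ℝ → ℝ)
    (hf : ∀ μ : ℝ, f μ = (1 / (1 - cp * w 0)) *
      (1 - cp * w' 0 - (cs + cp - cs * cp) *
        ∑ i ∈ Finset.Icc 1 m, max (w' i - μ * w i) 0))
    (hcs38 : cs < 0.38) (hcp38 : cp < 0.38)
    (μt : ℝ) (hμt0 : 0 < μt) (hμt1 : μt ≤ 1) (hfix : μt = f μt)
    (μseq : ℕ → ℝ) (h0 : μseq 0 = 0) (hrec : ∀ k : ℕ, μseq (k + 1) = f (μseq k)) :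
    Filter.Tendsto μseq Filter.atTop (nhds μt) := by
  set c := cs + cp - cs * cp with hc
  have hc0 : 0 ≤ c := by nlinarith
  have hc1 : c < 1 := by nlinarith
  have hsplit : w 0 + ∑ i ∈ Finset.Icc 1 m, w i = 1 := by
    rw [← hwsum, Finset.range_eq_Ico, Finset.sum_eq_sum_Ico_succ_bot (Nat.succ_pos m)]
    rfl
  have hw0 : w 0 ≤ 1 := by
    have := Finset.sum_nonneg (s := Finset.Icc 1 m) (fun i _ => hw i)
    linarith
  have hD : 0 < 1 - cp * w 0 := by nlinarith [hw 0]
  have hlip : ∀ x y : ℝ, |f x - f y| ≤ c * |x - y| := by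
    intro x y
    have hsum : |∑ i ∈ Finset.Icc 1 m, max (w' i - y * w i) 0
        - ∑ i ∈ Finset.Icc 1 m, max (w' i - x * w i) 0| ≤ (1 - w 0) * |x - y| := by
      rw [← Finset.sum_sub_distrib]
      calc _ ≤ ∑ i ∈ Finset.Icc 1 m, |max (w' i - y * w i) 0 - max (w' i - x * w i) 0| :=
            Finset.abs_sum_le_sum_abs _ _
        _ ≤ ∑ i ∈ Finset.Icc 1 m, w i * |x - y| := by
            refine Finset.sum_le_sum fun i _ => ?_
            refine (abs_max_sub_max_le_abs _ _ _).trans_eq ?_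
            rw [← abs_of_nonneg (hw i), ← abs_mul, abs_of_nonneg (hw i)]
            congr 1
            ring
        _ = (1 - w 0) * |x - y| := by
            rw [← Finset.sum_mul, ← hsplit]
            ring
    have heq : f x - f y = c * (∑ i ∈ Finset.Icc 1 m, max (w' i - y * w i) 0
        - ∑ i ∈ Finset.Icc 1 m, max (w' i - x * w i) 0) / (1 - cp * w 0) := by
      rw [hf, hf]
      ring
    rw [heq, abs_div, abs_mul, abs_of_nonneg hc0, abs_of_pos hD, div_le_iff₀ hD, mul_assoc]
    refine mul_le_mul_of_nonneg_left (hsum.trans ?_) hc0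
    rw [mul_comm]
    refine mul_le_mul_of_nonneg_left ?_ (abs_nonneg _)
    nlinarith [hw 0]
  have hbound : ∀ k, |μseq k - μt| ≤ c ^ k * |μt| := by
    intro k
    induction k with
    | zero => simp [h0]
    | succ k ih =>
      calc |μseq (k + 1) - μt| = |f (μseq k) - f μt| := by rw [hrec, ← hfix]
        _ ≤ c * |μseq k - μt| := hlip _ _
        _ ≤ c * (c ^ k * |μt|) := mul_le_mul_of_nonneg_left ih hc0
        _ = c ^ (k + 1) * |μt| := by ring
  have hlim : Filter.Tendsto (fun k : ℕ => c ^ k * |μt|) Filter.atTop (nhds 0) := by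
    simpa using (tendsto_pow_atTop_nhds_zero_of_lt_one hc0 hc1).mul_const |μt|
  rw [tendsto_iff_dist_tendsto_zero]
  exact squeeze_zero (fun _ => dist_nonneg) (fun k => by rw [Real.dist_eq]; exact hbound k) hlim
end

section
/- Let μ_t ∈ (0,1] be a fixed point of f, i.e. μ_t = f(μ_t). Then the iteration sequence started at 1, defined by μ⁽⁰⁾ = 1 and μ⁽ᵏ⁾ = f(μ⁽ᵏ⁻¹⁾) for k ≥ 1, is monotonically nonincreasing (μ⁽ᵏ⁺¹⁾ ≤ μ⁽ᵏ⁾ for every k ∈ ℕ) and is bounded below by μ_t (μ_t ≤ μ⁽ᵏ⁾ for every k ∈ ℕ). -/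
/-!
The map `f` is monotone, since each `(w'_i - μ w_i)⁺` is nonincreasing in `μ` and enters with a
nonpositive coefficient. Moreover `f 1 ≤ 1`: with `S = ∑ (w'_i - w_i)⁺ ≥ w_0 - w'_0` and
`c_s + c_p - c_s c_p ≥ c_p`, one gets `c_p (w_0 - w'_0) ≤ (c_s + c_p - c_s c_p) S`.
Applying the monotone `f` repeatedly to `f 1 ≤ 1` and to `μt ≤ 1` gives the two claims.
-/

theorem stmt10 (m : ℕ) (hm : 1 ≤ m) (cs cp : ℝ)
    (hcs0 : 0 ≤ cs) (hcs1 : cs < 1) (hcp0 : 0 ≤ cp) (hcp1 : cp < 1)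
    (w w' : ℕ → ℝ)
    (hw : ∀ i, 0 ≤ w i) (hw' : ∀ i, 0 ≤ w' i)
    (hwsum : ∑ i ∈ Finset.range (m + 1), w i = 1)
    (hw'sum : ∑ i ∈ Finset.range (m + 1), w' i = 1)
    (f : ℝ → ℝ)
    (hf : ∀ μ : ℝ, f μ = (1 / (1 - cp * w 0)) *
      (1 - cp * w' 0 - (cs + cp - cs * cp) *
        ∑ i ∈ Finset.Icc 1 m, max (w' i - μ * w i) 0))
    (μt : ℝ) (hμt0 : 0 < μt) (hμt1 : μt ≤ 1) (hfix : μt = f μt)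
    (μseq : ℕ → ℝ) (h0 : μseq 0 = 1) (hrec : ∀ k : ℕ, μseq (k + 1) = f (μseq k)) :
    (∀ k : ℕ, μseq (k + 1) ≤ μseq k) ∧ (∀ k : ℕ, μt ≤ μseq k) := by
  have hC : cp ≤ cs + cp - cs * cp := by nlinarith
  have hw0 : w 0 ≤ 1 := by
    rw [← hwsum]
    exact Finset.single_le_sum (fun i _ => hw i) (by simp)
  have hD : 0 < 1 - cp * w 0 := by nlinarith
  have hmono : Monotone f := by
    intro a b hab
    rw [hf, hf]
    have hS : ∑ i ∈ Finset.Icc 1 m, max (w' i - b * w i) 0 ≤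
        ∑ i ∈ Finset.Icc 1 m, max (w' i - a * w i) 0 := by
      refine Finset.sum_le_sum fun i _ => max_le_max ?_ le_rfl
      have := mul_le_mul_of_nonneg_right hab (hw i)
      linarith
    have := mul_le_mul_of_nonneg_left hS (hcp0.trans hC)
    exact mul_le_mul_of_nonneg_left (by linarith) (by positivity)
  have hsplit : ∀ v : ℕ → ℝ, ∑ i ∈ Finset.range (m + 1), v i =
      v 0 + ∑ i ∈ Finset.Icc 1 m, v i := by
    intro v
    rw [Finset.range_eq_Ico, Finset.sum_eq_sum_Ico_succ_bot (by omega)]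
    rfl
  have hf1 : f 1 ≤ 1 := by
    rw [hf, one_div, inv_mul_le_iff₀ hD]
    have hS0 : 0 ≤ ∑ i ∈ Finset.Icc 1 m, max (w' i - 1 * w i) 0 :=
      Finset.sum_nonneg fun i _ => le_max_right _ _
    have hS : ∑ i ∈ Finset.Icc 1 m, (w' i - w i) ≤
        ∑ i ∈ Finset.Icc 1 m, max (w' i - 1 * w i) 0 :=
      Finset.sum_le_sum fun i _ => by rw [one_mul]; exact le_max_left _ _
    rw [Finset.sum_sub_distrib] at hS
    rw [hsplit] at hwsum hw'sum
    -- Both weight vectors sum to 1, so the non-cash increments total `w 0 - w' 0`.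
    have hS' : w 0 - w' 0 ≤ ∑ i ∈ Finset.Icc 1 m, max (w' i - 1 * w i) 0 := by linarith
    have h1 := mul_le_mul_of_nonneg_left hS' hcp0
    have h2 := mul_le_mul_of_nonneg_right hC hS0
    linarith
  constructor
  · intro k
    induction k with
    | zero => rw [hrec, h0]; exact hf1
    | succ k ih => rw [hrec (k + 1), hrec k]; exact hmono (hrec k ▸ ih)
  · intro k
    induction k with
    | zero => rw [h0]; exact hμt1
    | succ k ih => rw [hrec, hfix]; exact hmono ih
end

section
/- (Lemma 5) Let μ_t ∈ (0,1] be a fixed point of f, i.e. μ_t = f(μ_t). Then the sequence defined by μ⁽⁰⁾ = 1 and μ⁽ᵏ⁾ = f(μ⁽ᵏ⁻¹⁾) for k ≥ 1 converges to μ_t. -/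
/-!
The map `f` is a contraction of `ℝ`. Since `x ↦ max x 0` is 1-Lipschitz and `∑ i ≥ 1, w i = 1 - w 0`,
`f` is Lipschitz with constant `L = c * (1 - w 0) / (1 - cp * w 0)`, where `c = cs + cp - cs * cp`.
As `1 - c = (1 - cs) * (1 - cp) > 0` and `c - cp = cs * (1 - cp) ≥ 0`, one has
`(1 - cp * w 0) - c * (1 - w 0) = (1 - c) + w 0 * (c - cp) > 0`, so `L < 1`. Hence the iterates
approach the fixed point geometrically: `|μseq k - μt| ≤ L ^ k * |1 - μt|`.
-/

theorem stmt11 (m : ℕ) (hm : 1 ≤ m) (cs cp : ℝ)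
    (hcs0 : 0 ≤ cs) (hcs1 : cs < 1) (hcp0 : 0 ≤ cp) (hcp1 : cp < 1)
    (w w' : ℕ → ℝ)
    (hw : ∀ i, 0 ≤ w i) (hw' : ∀ i, 0 ≤ w' i)
    (hwsum : ∑ i ∈ Finset.range (m + 1), w i = 1)
    (hw'sum : ∑ i ∈ Finset.range (m + 1), w' i = 1)
    (f : ℝ → ℝ)
    (hf : ∀ μ : ℝ, f μ = (1 / (1 - cp * w 0)) *
      (1 - cp * w' 0 - (cs + cp - cs * cp) *
        ∑ i ∈ Finset.Icc 1 m, max (w' i - μ * w i) 0))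
    (μt : ℝ) (hμt0 : 0 < μt) (hμt1 : μt ≤ 1) (hfix : μt = f μt)
    (μseq : ℕ → ℝ) (h0 : μseq 0 = 1) (hrec : ∀ k : ℕ, μseq (k + 1) = f (μseq k)) :
    Filter.Tendsto μseq Filter.atTop (nhds μt) := by
  have hsplit : w 0 + ∑ i ∈ Finset.Icc 1 m, w i = 1 := by
    rw [← hwsum, Finset.range_eq_Ico, Finset.sum_eq_sum_Ico_succ_bot (Nat.succ_pos m)]
    rfl
  have hS : 0 ≤ ∑ i ∈ Finset.Icc 1 m, w i := Finset.sum_nonneg fun i _ => hw i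
  have hD : 0 < 1 - cp * w 0 := by nlinarith [hw 0]
  have hccp : 0 ≤ cs * (1 - cp) := mul_nonneg hcs0 (by linarith)
  have hc0 : 0 ≤ cs + cp - cs * cp := by nlinarith
  have hc1 : 0 < (1 - cs) * (1 - cp) := mul_pos (by linarith) (by linarith)
  obtain ⟨L, hL⟩ : ∃ L, L = (cs + cp - cs * cp) * (1 - w 0) / (1 - cp * w 0) := ⟨_, rfl⟩
  have hL0 : 0 ≤ L := by
    rw [hL]
    exact div_nonneg (mul_nonneg hc0 (by linarith)) hD.le
  have hL1 : L < 1 := by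
    rw [hL, div_lt_one hD]
    nlinarith [mul_nonneg (hw 0) hccp]
  have hlip : ∀ x y, |f x - f y| ≤ L * |x - y| := by
    intro x y
    have hsum : |∑ i ∈ Finset.Icc 1 m, (max (w' i - y * w i) 0 - max (w' i - x * w i) 0)|
        ≤ (1 - w 0) * |x - y| := by
      calc _ ≤ ∑ i ∈ Finset.Icc 1 m, |max (w' i - y * w i) 0 - max (w' i - x * w i) 0| :=
            Finset.abs_sum_le_sum_abs _ _
        _ ≤ ∑ i ∈ Finset.Icc 1 m, w i * |x - y| := by
            refine Finset.sum_le_sum fun i _ => ?_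
            refine (abs_max_sub_max_le_abs _ _ _).trans (le_of_eq ?_)
            rw [← abs_of_nonneg (hw i), ← abs_mul, abs_of_nonneg (hw i)]
            congr 1
            ring
        _ = (1 - w 0) * |x - y| := by
            rw [← Finset.sum_mul, ← hsplit]
            ring
    have hdiff : f x - f y = (cs + cp - cs * cp) / (1 - cp * w 0) *
        ∑ i ∈ Finset.Icc 1 m, (max (w' i - y * w i) 0 - max (w' i - x * w i) 0) := by
      rw [hf, hf, Finset.sum_sub_distrib]
      ring
    rw [hdiff, abs_mul, abs_of_nonneg (div_nonneg hc0 hD.le)]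
    refine (mul_le_mul_of_nonneg_left hsum (div_nonneg hc0 hD.le)).trans (le_of_eq ?_)
    rw [hL]
    ring
  have hgeom : ∀ k, |μseq k - μt| ≤ L ^ k * |1 - μt| := by
    intro k
    induction k with
    | zero => simp [h0]
    | succ k ih =>
      calc |μseq (k + 1) - μt| = |f (μseq k) - f μt| := by rw [hrec, ← hfix]
        _ ≤ L * |μseq k - μt| := hlip _ _
        _ ≤ L * (L ^ k * |1 - μt|) := mul_le_mul_of_nonneg_left ih hL0
        _ = L ^ (k + 1) * |1 - μt| := by ring
  rw [tendsto_iff_norm_sub_tendsto_zero]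
  refine squeeze_zero (fun _ => norm_nonneg _) hgeom ?_
  simpa using (tendsto_pow_atTop_nhds_zero_of_lt_one hL0 hL1).mul_const |1 - μt|
end

section
/- (Theorem 1) Assume c_s < 0.38 and c_p < 0.38, and let μ_t ∈ (0,1] be a fixed point of f, i.e. μ_t = f(μ_t). Then for every initial value μ⊙ ∈ [0,1], the sequence defined by μ⁽⁰⁾ = μ⊙ and μ⁽ᵏ⁾ = f(μ⁽ᵏ⁻¹⁾) for k ≥ 1 converges to μ_t. -/
/-!
Put `C = cs + cp - cs * cp = 1 - (1 - cs) * (1 - cp)`, which lies in `[0, 1)`. Since `x ↦ x⁺` is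
1-Lipschitz, the sum in `f` is Lipschitz with constant `∑_{i ≥ 1} w i = 1 - w 0`, so `f` is
Lipschitz on all of `ℝ` with constant `C * (1 - w 0) / (1 - cp * w 0) ≤ C`. Hence `f` is a
contraction, and its iterates converge geometrically to the fixed point.
-/

theorem stmt12 (m : ℕ) (hm : 1 ≤ m) (cs cp : ℝ)
    (hcs0 : 0 ≤ cs) (hcs1 : cs < 1) (hcp0 : 0 ≤ cp) (hcp1 : cp < 1)
    (w w' : ℕ → ℝ)
    (hw : ∀ i, 0 ≤ w i) (hw' : ∀ i, 0 ≤ w' i)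
    (hwsum : ∑ i ∈ Finset.range (m + 1), w i = 1)
    (hw'sum : ∑ i ∈ Finset.range (m + 1), w' i = 1)
    (f : ℝ → ℝ)
    (hf : ∀ μ : ℝ, f μ = (1 / (1 - cp * w 0)) *
      (1 - cp * w' 0 - (cs + cp - cs * cp) *
        ∑ i ∈ Finset.Icc 1 m, max (w' i - μ * w i) 0))
    (hcs38 : cs < 0.38) (hcp38 : cp < 0.38)
    (μt : ℝ) (hμt0 : 0 < μt) (hμt1 : μt ≤ 1) (hfix : μt = f μt)
    (μinit : ℝ) (hinit : μinit ∈ Set.Icc (0 : ℝ) 1)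
    (μseq : ℕ → ℝ) (h0 : μseq 0 = μinit) (hrec : ∀ k : ℕ, μseq (k + 1) = f (μseq k)) :
    Filter.Tendsto μseq Filter.atTop (nhds μt) := by
  have hsplit : ∑ i ∈ Finset.Icc 1 m, w i = 1 - w 0 := by
    have h1 : Finset.range (m + 1) = insert 0 (Finset.Icc 1 m) := by
      ext i
      simp only [Finset.mem_range, Finset.mem_insert, Finset.mem_Icc]
      omega
    rw [h1, Finset.sum_insert (by simp)] at hwsum
    linarith
  have hw0 : w 0 ≤ 1 := by
    have := Finset.sum_nonneg (s := Finset.Icc 1 m) (fun i _ => hw i)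
    linarith
  have hD : 0 < 1 - cp * w 0 := by nlinarith [hw 0]
  have hC0 : 0 ≤ cs + cp - cs * cp := by nlinarith
  have hC1 : cs + cp - cs * cp < 1 := by nlinarith
  set C := cs + cp - cs * cp with hC
  have hsum : ∀ x y : ℝ, |∑ i ∈ Finset.Icc 1 m, max (w' i - x * w i) 0 -
      ∑ i ∈ Finset.Icc 1 m, max (w' i - y * w i) 0| ≤ (1 - w 0) * |x - y| := by
    intro x y
    rw [← Finset.sum_sub_distrib, ← hsplit, Finset.sum_mul]
    refine (Finset.abs_sum_le_sum_abs _ _).trans (Finset.sum_le_sum fun i _ => ?_)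
    refine (abs_max_sub_max_le_abs _ _ _).trans (le_of_eq ?_)
    rw [show w' i - x * w i - (w' i - y * w i) = -(w i * (x - y)) by ring, abs_neg, abs_mul,
      abs_of_nonneg (hw i)]
  have hlip : ∀ x y : ℝ, |f x - f y| ≤ C * |x - y| := by
    intro x y
    have h := hsum x y
    rw [hf, hf]
    set S := ∑ i ∈ Finset.Icc 1 m, max (w' i - x * w i) 0
    set T := ∑ i ∈ Finset.Icc 1 m, max (w' i - y * w i) 0
    rw [show 1 / (1 - cp * w 0) * (1 - cp * w' 0 - C * S) -
        1 / (1 - cp * w 0) * (1 - cp * w' 0 - C * T) = -(C * (S - T) / (1 - cp * w 0)) by ring,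
      abs_neg, abs_div, abs_mul, abs_of_nonneg hC0, abs_of_pos hD, div_le_iff₀ hD, mul_assoc]
    refine mul_le_mul_of_nonneg_left (h.trans ?_) hC0
    rw [mul_comm]
    exact mul_le_mul_of_nonneg_left (by nlinarith [hw 0]) (abs_nonneg _)
  have hgeo : ∀ k, |μseq k - μt| ≤ C ^ k * |μseq 0 - μt| := by
    intro k
    induction k with
    | zero => simp
    | succ k ih =>
      have h := hlip (μseq k) μt
      rw [← hfix, ← hrec] at h
      refine h.trans ((mul_le_mul_of_nonneg_left ih hC0).trans (le_of_eq ?_))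
      ring
  rw [tendsto_iff_dist_tendsto_zero]
  refine squeeze_zero (fun _ => dist_nonneg) hgeo ?_
  simpa using (tendsto_pow_atTop_nhds_zero_of_lt_one hC0 hC1).mul_const |μseq 0 - μt|
end

section
/- Assume c_s < 0.38 and c_p < 0.38. Then the fixed point of f in (0,1] is unique: if μ₁, μ₂ ∈ (0,1] satisfy μ₁ = f(μ₁) and μ₂ = f(μ₂), then μ₁ = μ₂. -/
/-!
Write `k = cs + cp - cs * cp = 1 - (1 - cs) * (1 - cp)`. Each summand `(w' i - μ * w i)⁺` drops by at
most `(ν - μ) * w i` when `μ` increases to `ν`, so the sum drops by at most `(ν - μ) * (1 - w 0)`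
(`sum_posPart_sub_le`). Two fixed points `μ < ν` would therefore satisfy
`(1 - cp * w 0) * (ν - μ) ≤ k * (1 - w 0) * (ν - μ)`. This is impossible because
`1 - cp * w 0 - k * (1 - w 0) = (1 - k) * (1 - w 0) + (1 - cp) * w 0 > 0`;
that is, `f` is a contraction as soon as `cs, cp < 1`.
-/

lemma sum_posPart_sub_le (s : Finset ℕ) (w w' : ℕ → ℝ) (hw : ∀ i, 0 ≤ w i) {μ ν : ℝ}
    (h : μ ≤ ν) :
    ∑ i ∈ s, max (w' i - μ * w i) 0 - ∑ i ∈ s, max (w' i - ν * w i) 0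
      ≤ (ν - μ) * ∑ i ∈ s, w i := by
  rw [← Finset.sum_sub_distrib, Finset.mul_sum]
  refine Finset.sum_le_sum fun i _ => ?_
  have h0 : 0 ≤ (ν - μ) * w i := mul_nonneg (sub_nonneg.2 h) (hw i)
  have h1 := le_max_left (w' i - ν * w i) 0
  have h2 := le_max_right (w' i - ν * w i) 0
  rw [sub_le_iff_le_add]
  exact max_le (by linarith) (by linarith)

theorem stmt13 (m : ℕ) (hm : 1 ≤ m) (cs cp : ℝ)
    (hcs0 : 0 ≤ cs) (hcs1 : cs < 1) (hcp0 : 0 ≤ cp) (hcp1 : cp < 1)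
    (w w' : ℕ → ℝ)
    (hw : ∀ i, 0 ≤ w i) (hw' : ∀ i, 0 ≤ w' i)
    (hwsum : ∑ i ∈ Finset.range (m + 1), w i = 1)
    (hw'sum : ∑ i ∈ Finset.range (m + 1), w' i = 1)
    (f : ℝ → ℝ)
    (hf : ∀ μ : ℝ, f μ = (1 / (1 - cp * w 0)) *
      (1 - cp * w' 0 - (cs + cp - cs * cp) *
        ∑ i ∈ Finset.Icc 1 m, max (w' i - μ * w i) 0))
    (hcs38 : cs < 0.38) (hcp38 : cp < 0.38)
    (μ₁ μ₂ : ℝ) (h₁ : μ₁ ∈ Set.Ioc (0 : ℝ) 1) (h₂ : μ₂ ∈ Set.Ioc (0 : ℝ) 1)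
    (hfix₁ : μ₁ = f μ₁) (hfix₂ : μ₂ = f μ₂) :
    μ₁ = μ₂ := by
  have hsum : ∑ i ∈ Finset.Icc 1 m, w i = 1 - w 0 := by
    rw [Finset.range_eq_Ico, Finset.sum_eq_sum_Ico_succ_bot (Nat.succ_pos m)] at hwsum
    have hI : Finset.Icc 1 m = Finset.Ico (0 + 1) (m + 1) := by
      ext i
      simp only [Finset.mem_Icc, Finset.mem_Ico]
      omega
    rw [hI]
    linarith
  have hw0 : w 0 ≤ 1 := by
    have := Finset.sum_nonneg (s := Finset.Icc 1 m) fun i _ => hw i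
    linarith
  have hk0 : 0 ≤ cs + cp - cs * cp := by nlinarith
  have hk1 : 0 < (1 - cs) * (1 - cp) := mul_pos (by linarith) (by linarith)
  have hden : 0 < 1 - cp * w 0 := by nlinarith [hw 0]
  have hgap : 0 < 1 - cp * w 0 - (cs + cp - cs * cp) * (1 - w 0) := by
    -- The gap is at least `(1 - cs) * (1 - cp)`, its value at `w 0 = 0`.
    have : 0 ≤ cs * (1 - cp) * w 0 := mul_nonneg (mul_nonneg hcs0 (by linarith)) (hw 0)
    nlinarith
  have hfix : ∀ μ, μ = f μ → (1 - cp * w 0) * μ = 1 - cp * w' 0 - (cs + cp - cs * cp) *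
      ∑ i ∈ Finset.Icc 1 m, max (w' i - μ * w i) 0 := by
    intro μ h
    rw [hf μ, one_div, eq_inv_mul_iff_mul_eq₀ hden.ne'] at h
    exact h
  have key : ∀ μ ν, μ = f μ → ν = f ν → ¬ μ < ν := by
    intro μ ν hμ hν hlt
    have hS := sum_posPart_sub_le (Finset.Icc 1 m) w w' hw hlt.le
    rw [hsum] at hS
    have hkS := mul_le_mul_of_nonneg_left hS hk0
    have hpos := mul_pos hgap (sub_pos.2 hlt)
    linarith [hfix μ hμ, hfix ν hν]
  exact le_antisymm (not_lt.1 (key _ _ hfix₂ hfix₁)) (not_lt.1 (key _ _ hfix₁ hfix₂))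
end
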